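/- Let Φ be a real-valued function that is C² (twice continuously differentiable) on an open subset of the d×d real symmetric matrices containing v⁻¹W, where v > 0 and W is a d×d real symmetric matrix. Let u, p, q ∈ ℝ and let R be a d×d real symmetric matrix, and set ξ = v⁻¹(R − q·v⁻¹·W). Then the second derivative at t = 0 of the function t ↦ (u + t·p) − (v + t·q)·Φ((v + t·q)⁻¹·(W + t·R)) equals −v times the second derivative at s = 0 of the function s ↦ Φ(v⁻¹W + s·ξ). -/

import Mathlib

open Matrix

attribute [local instance] Matrix.frobeniusNormedAddCommGroup Matrix.frobeniusNormedSpace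

/-- The space `𝕊ᵈ` of `d × d` real symmetric matrices, as the submodule of self-adjoint
matrices (over `ℝ`, self-adjoint means symmetric). -/
noncomputable abbrev SymMat (d : ℕ) : Submodule ℝ (Matrix (Fin d) (Fin d) ℝ) :=
  selfAdjoint.submodule ℝ (Matrix (Fin d) (Fin d) ℝ)

/-!
For scalar functions `l`, `s` and a vector function `g`, the chain and product rules give
`(l • g ∘ s)'' = l s'² • g''(s) + (l s)'' • g'(s) + l'' • (g(s) - s • g'(s))`,
so only the first term survives when both `l` and `l s` are affine. The perspective along a line
has this form: `(v + t q)⁻¹ (W + t R) = v⁻¹ W + s(t) ξ` with `s(t) = t v / (v + t q)`, so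
`l(t) = v + t q` and `l(t) s(t) = t v`, while `s'(0) = 1`.
-/

open scoped Topology

section IteratedDerivTwo

variable {𝕜 F : Type*} [NontriviallyNormedField 𝕜] [NormedAddCommGroup F] [NormedSpace 𝕜 F]

lemma iteratedDeriv_two_smul {f : 𝕜 → 𝕜} {g : 𝕜 → F} {x : 𝕜}
    (hf : ContDiffAt 𝕜 2 f x) (hg : ContDiffAt 𝕜 2 g x) :
    iteratedDeriv 2 (f • g) x =
      f x • iteratedDeriv 2 g x + (2 * deriv f x) • deriv g x + iteratedDeriv 2 f x • g x := by
  have leibniz := iteratedDerivWithin_smul (Set.mem_univ x) uniqueDiffOn_univ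
    (n := 2) hf.contDiffWithinAt hg.contDiffWithinAt
  simpa [Finset.sum_range_succ, ← Nat.cast_smul_eq_nsmul 𝕜, mul_smul] using leibniz

lemma iteratedDeriv_two_smul_comp {g : 𝕜 → F} {l s : 𝕜 → 𝕜} {x : 𝕜}
    (hg : ContDiffAt 𝕜 2 g (s x)) (hl : ContDiffAt 𝕜 2 l x) (hs : ContDiffAt 𝕜 2 s x) :
    iteratedDeriv 2 (l • g ∘ s) x =
      (l x * deriv s x ^ 2) • iteratedDeriv 2 g (s x) + iteratedDeriv 2 (l • s) x • deriv g (s x) +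
        iteratedDeriv 2 l x • (g (s x) - s x • deriv g (s x)) := by
  have deriv_comp : deriv (g ∘ s) x = deriv s x • deriv g (s x) :=
    deriv.scomp x (hg.differentiableAt two_ne_zero) (hs.differentiableAt two_ne_zero)
  rw [iteratedDeriv_two_smul hl (hg.comp x hs), iteratedDeriv_two_smul hl hs,
    iteratedDeriv_scomp_two hg hs, deriv_comp]
  simp only [smul_eq_mul, Function.comp_apply]
  module

lemma iteratedDeriv_two_affine (a b : F) (x : 𝕜) :
    iteratedDeriv 2 (fun t : 𝕜 => a + t • b) x = 0 := by
  rw [iteratedDeriv_const_add two_pos, iteratedDeriv_smul_const contDiffAt_fun_id]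
  change iteratedDeriv 2 id x • b = 0
  simp [iteratedDeriv_id]

lemma eventually_add_mul_ne_zero {v : 𝕜} (hv : v ≠ 0) (q : 𝕜) :
    ∀ᶠ t in 𝓝 (0 : 𝕜), v + t * q ≠ 0 :=
  ContinuousAt.eventually_ne (by fun_prop) (by simpa using hv)

lemma iteratedDeriv_two_smul_comp_mul_div {g : 𝕜 → F} (hg : ContDiffAt 𝕜 2 g 0)
    {v : 𝕜} (hv : v ≠ 0) (q : 𝕜) :
    iteratedDeriv 2 (fun t : 𝕜 => (v + t * q) • g (t * v / (v + t * q))) 0 =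
      v • iteratedDeriv 2 g 0 := by
  let l : 𝕜 → 𝕜 := fun t => v + t * q
  let s : 𝕜 → 𝕜 := fun t => t * v / l t
  have l_zero : l 0 = v := by simp [l]
  have s_zero : s 0 = 0 := by simp [s]
  have hl : ContDiffAt 𝕜 2 l 0 := by fun_prop
  have hs : ContDiffAt 𝕜 2 s 0 := ContDiffAt.div (by fun_prop) hl (by simpa [l] using hv)
  have l_affine : iteratedDeriv 2 l 0 = 0 := iteratedDeriv_two_affine v q 0
  have l_smul_s_affine : iteratedDeriv 2 (l • s) 0 = 0 := by
    have l_smul_s : l • s =ᶠ[𝓝 0] fun t => 0 + t • v := by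
      filter_upwards [eventually_add_mul_ne_zero hv q] with t ht
      simpa [s] using mul_div_cancel₀ (t * v) ht
    rw [l_smul_s.iteratedDeriv_eq, iteratedDeriv_two_affine]
  have deriv_s : deriv s 0 = 1 := by
    have h : HasDerivAt s _ 0 := ((hasDerivAt_id (0 : 𝕜)).mul_const v).div
      (hl.differentiableAt two_ne_zero).hasDerivAt (by rwa [l_zero])
    simpa [l_zero, hv, pow_two] using h.deriv
  have hg' : ContDiffAt 𝕜 2 g (s 0) := by rwa [s_zero]
  change iteratedDeriv 2 (l • g ∘ s) 0 = _
  rw [iteratedDeriv_two_smul_comp hg' hl hs, l_affine, l_smul_s_affine, deriv_s, l_zero, s_zero]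
  simp

end IteratedDerivTwo

lemma inv_smul_add_smul_eq_add_div_smul {𝕜 E : Type*} [Field 𝕜] [AddCommGroup E] [Module 𝕜 E]
    {v q t : 𝕜} (hv : v ≠ 0) (ht : v + t * q ≠ 0) (W R : E) :
    (v + t * q)⁻¹ • (W + t • R) =
      v⁻¹ • W + (t * v / (v + t * q)) • v⁻¹ • (R - (q * v⁻¹) • W) := by
  match_scalars <;> field_simp
  ring

theorem second_deriv_of_perspective_composition_general {𝕜 E F : Type*}
    [NontriviallyNormedField 𝕜] [NormedAddCommGroup E] [NormedSpace 𝕜 E]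
    [NormedAddCommGroup F] [NormedSpace 𝕜 F] {Φ : E → F} {v : 𝕜} (hv : v ≠ 0) {W : E}
    (hΦ : ContDiffAt 𝕜 2 Φ (v⁻¹ • W)) (u p : F) (q : 𝕜) (R : E) :
    let ξ : E := v⁻¹ • (R - (q * v⁻¹) • W)
    iteratedDeriv 2 (fun t : 𝕜 => (u + t • p) - (v + t * q) • Φ ((v + t * q)⁻¹ • (W + t • R))) 0
      = -v • iteratedDeriv 2 (fun s : 𝕜 => Φ (v⁻¹ • W + s • ξ)) 0 := by
  intro ξ
  have hline : ContDiffAt 𝕜 2 (fun s : 𝕜 => Φ (v⁻¹ • W + s • ξ)) 0 :=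
    ContDiffAt.comp 0 (by simpa using hΦ) (by fun_prop)
  have hpersp : ContDiffAt 𝕜 2 (fun t : 𝕜 => (v + t * q) • Φ ((v + t * q)⁻¹ • (W + t • R))) 0 := by
    have hl : ContDiffAt 𝕜 2 (fun t : 𝕜 => v + t * q) 0 := by fun_prop
    refine hl.smul (ContDiffAt.comp 0 (by simpa using hΦ) ((hl.inv (by simpa using hv)).smul ?_))
    fun_prop
  have reparam : (fun t : 𝕜 => (v + t * q) • Φ ((v + t * q)⁻¹ • (W + t • R))) =ᶠ[𝓝 0]
      fun t => (v + t * q) • Φ (v⁻¹ • W + (t * v / (v + t * q)) • ξ) := by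
    filter_upwards [eventually_add_mul_ne_zero hv q] with t ht
    rw [inv_smul_add_smul_eq_add_div_smul hv ht]
  rw [iteratedDeriv_fun_sub (by fun_prop) hpersp, iteratedDeriv_two_affine,
    reparam.iteratedDeriv_eq, iteratedDeriv_two_smul_comp_mul_div hline hv q, zero_sub, neg_smul]

/-- If `Φ` is `C²` on an open subset of `𝕊ᵈ` containing `v⁻¹ W`, then the second derivative
at `t = 0` of `t ↦ (u + t p) - (v + t q) Φ((v + t q)⁻¹ (W + t R))` equals `-v` times the
second derivative at `s = 0` of `s ↦ Φ(v⁻¹ W + s ξ)`, where `ξ = v⁻¹ (R - q v⁻¹ W)`. -/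
theorem second_deriv_of_perspective_composition {d : ℕ} (Φ : SymMat d → ℝ)
    (U : Set (SymMat d)) (hU : IsOpen U) (hΦ : ContDiffOn ℝ 2 Φ U)
    (v : ℝ) (hv : 0 < v) (W : SymMat d) (hWU : v⁻¹ • W ∈ U)
    (u p q : ℝ) (R : SymMat d) :
    let ξ : SymMat d := v⁻¹ • (R - (q * v⁻¹) • W)
    iteratedDeriv 2 (fun t : ℝ => (u + t * p) - (v + t * q) * Φ ((v + t * q)⁻¹ • (W + t • R))) 0
      = -v * iteratedDeriv 2 (fun s : ℝ => Φ (v⁻¹ • W + s • ξ)) 0 := by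
  simpa using second_deriv_of_perspective_composition_general hv.ne'
    (hΦ.contDiffAt (hU.mem_nhds hWU)) u p q R
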